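/- Size of learning data: there exists a constant C such that for every solvable tuple pattern t = (p₁,…,pₙ) with |p₁···pₙ| = m there exists learning data M (with two rows) such that (i) size(M) ≤ C·(m+n)·(⌈log₂ n⌉ + 1); (ii) ((x₁,…,xₙ), [M/x⃗]) ⟶* (t, Θ) for some Θ with (t, Θ) admitting no further ⟶ step; and (iii) whenever ((x₁,…,xₙ), [M/x⃗]) ⟶* (t′, Θ′) with (t′, Θ′) admitting no further ⟶ step, L(t) = L(t′). -/

import Mathlib

namespace STPaper

variable {A V : Type}

/-- A word over the alphabet `A`. -/
abbrev Word (A : Type) := List A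

/-- A pattern: a finite word over `A ⊕ V` (letters and variables). -/
abbrev Pat (A V : Type) := List (A ⊕ V)

/-- A tuple pattern: a finite tuple of patterns. -/
abbrev TP (A V : Type) := List (Pat A V)

/-- A column of learning data: one word per row. -/
abbrev Col (A : Type) := List (Word A)

/-- Learning data, represented as its list of columns. -/
abbrev Data (A : Type) := List (Col A)

/-- A data-substitution `[M/x⃗]`: the number `m` of rows together with the list pairing each
variable of `x⃗` with the corresponding column of `M`. -/
structure DSub (A V : Type) where
  m : ℕ
  entries : List (V × Col A)

/-- Apply a word-valued substitution to a pattern. -/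
def substPatW (θ : V → Word A) (p : Pat A V) : Word A :=
  (p.map (Sum.elim (fun a => [a]) θ)).flatten

/-- Look up the column assigned to a variable by a data-substitution (default: all-ε). -/
def lookupCol [DecidableEq V] (E : List (V × Col A)) (x : V) : Col A :=
  match E.find? (fun e => decide (e.1 = x)) with
  | some e => e.2
  | none => []

/-- The substitution corresponding to the `i`-th row of a data-substitution. -/
def DSub.rowSub [DecidableEq V] (Θ : DSub A V) (i : ℕ) : V → Word A :=
  fun x => (lookupCol Θ.entries x).getD i []

/-- `Θ.apply t` : the matrix `Θt` (as a list of columns, each of length `Θ.m`). -/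
def DSub.apply [DecidableEq V] (Θ : DSub A V) (t : TP A V) : Data A :=
  t.map (fun p => (List.range Θ.m).map (fun i => substPatW (Θ.rowSub i) p))

/-- Well-formedness of a data-substitution: pairwise-distinct variables and
all columns of length `m`. -/
def DSub.WF (Θ : DSub A V) : Prop :=
  (Θ.entries.map Prod.fst).Nodup ∧ ∀ e ∈ Θ.entries, e.2.length = Θ.m

/-- The free variables of a tuple pattern. -/
def fvTP (t : TP A V) : Set V := {x | Sum.inr x ∈ t.flatten}

/-- Substitution of a single pattern `q` for the variable `x` in a pattern. -/
def substVar [DecidableEq A] [DecidableEq V] (x : V) (q : Pat A V) (p : Pat A V) : Pat A V :=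
  (p.map (fun s => if s = Sum.inr x then q else [s])).flatten

/-- Substitution of a single pattern `q` for the variable `x` in a tuple pattern. -/
def substVarTP [DecidableEq A] [DecidableEq V] (x : V) (q : Pat A V) (t : TP A V) : TP A V :=
  t.map (substVar x q)

/-- Simultaneous substitution `[qs/xs]p` of the patterns `qs` for the variables `xs`. -/
def substVars [DecidableEq V] (xs : List V) (qs : List (Pat A V)) (p : Pat A V) : Pat A V :=
  (p.map (fun s =>
    match s with
    | Sum.inl a => [Sum.inl a]
    | Sum.inr x =>
      match (xs.zip qs).find? (fun e => decide (e.1 = x)) with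
      | some e => e.2
      | none => [Sum.inr x])).flatten

/-- Simultaneous substitution `[qs/xs]t` on a tuple pattern. -/
def substVarsTP [DecidableEq V] (xs : List V) (qs : List (Pat A V)) (t : TP A V) : TP A V :=
  t.map (substVars xs qs)

/-- A column is the all-ε column. -/
def allEps (c : Col A) : Prop := ∀ w ∈ c, w = []

/-- The trivial tuple pattern `(x₁, …, xₙ)`. -/
def trivTP (xs : List V) : TP A V := xs.map (fun x => [Sum.inr x])

section
variable [DecidableEq A] [DecidableEq V]

/-- The rewriting relation ⟶ on pairs of a tuple pattern and a data-substitution. -/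
inductive Step : (TP A V × DSub A V) → (TP A V × DSub A V) → Prop
  | pre (t : TP A V) (m : ℕ) (E : List (V × Col A)) (i j : ℕ)
      (hi : i < E.length) (hj : j < E.length) (hij : i ≠ j)
      (s : Col A) (hslen : s.length = (E[i]'hi).2.length)
      (hpre : (E[j]'hj).2 = List.zipWith (· ++ ·) (E[i]'hi).2 s)
      (hne : ¬ allEps (E[i]'hi).2)
      (x' : V) (hx1 : x' ∉ E.map Prod.fst) (hx2 : Sum.inr x' ∉ t.flatten) :
      Step (t, ⟨m, E⟩)
        (substVarTP (E[j]'hj).1 [Sum.inr (E[i]'hi).1, Sum.inr x'] t,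
         ⟨m, E.set j (x', s)⟩)
  | cpre (t : TP A V) (m : ℕ) (E : List (V × Col A)) (j : ℕ)
      (hj : j < E.length) (a : A) (s : Col A)
      (hpre : (E[j]'hj).2 = s.map (fun w => a :: w))
      (x' : V) (hx1 : x' ∉ E.map Prod.fst) (hx2 : Sum.inr x' ∉ t.flatten) :
      Step (t, ⟨m, E⟩)
        (substVarTP (E[j]'hj).1 [Sum.inl a, Sum.inr x'] t, ⟨m, E.set j (x', s)⟩)
  | eps (t : TP A V) (m : ℕ) (E : List (V × Col A)) (j : ℕ)
      (hj : j < E.length) (heps : allEps (E[j]'hj).2) :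
      Step (t, ⟨m, E⟩) (substVarTP (E[j]'hj).1 [] t, ⟨m, E.eraseIdx j⟩)

/-- `n`-step rewriting. -/
def StepN : ℕ → (TP A V × DSub A V) → (TP A V × DSub A V) → Prop
  | 0 => fun c₁ c₂ => c₁ = c₂
  | n + 1 => fun c₁ c₃ => ∃ c₂, Step c₁ c₂ ∧ StepN n c₂ c₃

end

/-- The reduction relation ⇒ on tuple patterns. -/
inductive PStep : TP A V → TP A V → Prop
  | pre (t : TP A V) (i j : ℕ) (hi : i < t.length) (hj : j < t.length)
      (hij : i ≠ j) (p' : Pat A V)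
      (hdec : t[j]'hj = (t[i]'hi) ++ p') (hne : t[i]'hi ≠ []) :
      PStep t (t.set j p')
  | cpre (t : TP A V) (j : ℕ) (hj : j < t.length) (a : A) (p' : Pat A V)
      (hdec : t[j]'hj = Sum.inl a :: p') :
      PStep t (t.set j p')
  | eps (t : TP A V) (j : ℕ) (hj : j < t.length) (heps : t[j]'hj = []) :
      PStep t (t.eraseIdx j)

/-- A tuple pattern is solvable if it reduces to a trivial tuple of pairwise
distinct variables. -/
def Solvable (t : TP A V) : Prop :=
  ∃ ys : List V, ys.Nodup ∧ Relation.ReflTransGen PStep t (trivTP ys)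

/-- The language of a tuple pattern. -/
def lang (t : TP A V) : Set (List (Word A)) :=
  {w | ∃ θ : V → Word A, w = t.map (substPatW θ)}

/-- `M ⊨ t` : there is a data-substitution `Θ` (with `rows` rows) with `Θt = M`. -/
def Models [DecidableEq V] (M : Data A) (rows : ℕ) (t : TP A V) : Prop :=
  ∃ Θ : DSub A V, Θ.m = rows ∧ Θ.WF ∧ Θ.apply t = M

/-- `M ⊨ₛ t` : additionally, no variable of `t` is mapped to ε in every row. -/
def SModels [DecidableEq V] (M : Data A) (rows : ℕ) (t : TP A V) : Prop :=
  ∃ Θ : DSub A V, Θ.m = rows ∧ Θ.WF ∧ Θ.apply t = M ∧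
    ∀ x ∈ fvTP t, ¬ allEps (lookupCol Θ.entries x)

/-- Renaming the variables of a tuple pattern. -/
def renameTP (ρ : V → V) (t : TP A V) : TP A V :=
  t.map (List.map (Sum.map id ρ))

/-- The measure `#t` of a tuple pattern. -/
def tpMeasure (t : TP A V) : ℕ := (t.map List.length).sum + t.length

/-- `size(M)`. -/
def dataSize (M : Data A) : ℕ :=
  (M.map (fun c => (c.map (fun w => w.length + 1)).sum)).sum

/-- Learning data (as columns) whose rows enumerate the given list of tuples. -/
def colsOfRows (n : ℕ) (rows : List (List (Word A))) : Data A :=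
  (List.range n).map (fun j => rows.map (fun r => r.getD j []))

/-- `m ⊨ₛ t` for a (possibly infinite) set of tuples of words. -/
def SetSModels (S : Set (List (Word A))) (t : TP A V) : Prop :=
  ∃ θ : S → V → Word A,
    (∀ v : S, (v : List (Word A)) = t.map (substPatW (θ v))) ∧
    ∀ x ∈ fvTP t, ∃ v : S, θ v x ≠ []

/-- A rule instance of the ⇒ relation. -/
inductive RuleInst (A V : Type) where
  | pre (i j : ℕ)
  | cpre (j : ℕ) (a : A)
  | eps (j : ℕ)

/-- The reduction step derived by a given rule instance. -/
def RuleStep : RuleInst A V → TP A V → TP A V → Prop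
  | .pre i j, t, t' => ∃ (hi : i < t.length) (hj : j < t.length),
      i ≠ j ∧ t[i]'hi ≠ [] ∧ ∃ p', t[j]'hj = (t[i]'hi) ++ p' ∧ t' = t.set j p'
  | .cpre j a, t, t' => ∃ (_ : j < t.length) (p' : Pat A V),
      t.getD j [] = Sum.inl a :: p' ∧ t' = t.set j p'
  | .eps j, t, t' => ∃ (_ : j < t.length), t.getD j [] = ([] : Pat A V) ∧ t' = t.eraseIdx j

/-- Well-definedness of the residual of a tuple pattern along a rule instance. -/
def ResDefined : RuleInst A V → TP A V → Prop
  | .pre i j, t => i < t.length ∧ j < t.length ∧ (t.getD i []) <+: (t.getD j [])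
  | .cpre j a, t => j < t.length ∧ ∃ p', t.getD j [] = Sum.inl a :: p'
  | .eps j, t => j < t.length ∧ t.getD j [] = ([] : Pat A V)

/-- The residual of a tuple pattern along a rule instance. -/
def residual : RuleInst A V → TP A V → TP A V
  | .pre i j, t => t.set j ((t.getD j []).drop (t.getD i []).length)
  | .cpre j _, t => t.set j ((t.getD j []).drop 1)
  | .eps j, t => t.eraseIdx j

/-- The reduction relation ⇒ extended with the postfix rules. -/
inductive PStepX : TP A V → TP A V → Prop
  | pre (t : TP A V) (i j : ℕ) (hi : i < t.length) (hj : j < t.length)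
      (hij : i ≠ j) (p' : Pat A V)
      (hdec : t[j]'hj = (t[i]'hi) ++ p') (hne : t[i]'hi ≠ []) :
      PStepX t (t.set j p')
  | cpre (t : TP A V) (j : ℕ) (hj : j < t.length) (a : A) (p' : Pat A V)
      (hdec : t[j]'hj = Sum.inl a :: p') :
      PStepX t (t.set j p')
  | eps (t : TP A V) (j : ℕ) (hj : j < t.length) (heps : t[j]'hj = []) :
      PStepX t (t.eraseIdx j)
  | post (t : TP A V) (i j : ℕ) (hi : i < t.length) (hj : j < t.length)
      (hij : i ≠ j) (p' : Pat A V)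
      (hdec : t[j]'hj = p' ++ (t[i]'hi)) (hne : t[i]'hi ≠ []) :
      PStepX t (t.set j p')
  | cpost (t : TP A V) (j : ℕ) (hj : j < t.length) (a : A) (p' : Pat A V)
      (hdec : t[j]'hj = p' ++ [Sum.inl a]) :
      PStepX t (t.set j p')

/-! ### Helper material -/

/-- The left-unitary hull of the components of `t` and the letters. -/
inductive Hull (t : TP A V) : Pat A V → Prop
  | nil : Hull t []
  | letter (a : A) : Hull t [Sum.inl a]
  | mem (p : Pat A V) (h : p ∈ t) : Hull t p
  | app (u v : Pat A V) (hu : Hull t u) (hv : Hull t v) : Hull t (u ++ v)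
  | cancel (u v : Pat A V) (hu : Hull t u) (huv : Hull t (u ++ v)) : Hull t v

theorem Hull.mono {t t' : TP A V} (h : ∀ p ∈ t, Hull t' p) {w : Pat A V} (hw : Hull t w) :
    Hull t' w := by
  induction hw with
  | nil => exact .nil
  | letter a => exact .letter a
  | mem p hp => exact h p hp
  | app u v _ _ hu hv => exact .app u v hu hv
  | cancel u v _ _ hu huv => exact .cancel u v hu huv

theorem mem_set_or {α : Type} {t : List α} {j : ℕ} (hj : j < t.length) (p' : α) {p : α}
    (hp : p ∈ t) : p = t[j] ∨ p ∈ t.set j p' := by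
  obtain ⟨k, hk, rfl⟩ := List.getElem_of_mem hp
  by_cases h : k = j
  · subst h; exact Or.inl rfl
  · right
    rw [List.mem_iff_getElem]
    refine ⟨k, by simpa using hk, ?_⟩
    rw [List.getElem_set_ne (by omega)]

theorem mem_eraseIdx_or {α : Type} {t : List α} {j : ℕ} (hj : j < t.length) {p : α}
    (hp : p ∈ t) : p = t[j] ∨ p ∈ t.eraseIdx j := by
  obtain ⟨k, hk, rfl⟩ := List.getElem_of_mem hp
  by_cases h : k = j
  · subst h; exact Or.inl rfl
  · right
    rw [List.mem_eraseIdx_iff_getElem]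
    exact ⟨k, hk, h, rfl⟩

theorem hull_set {t : TP A V} {j : ℕ} (hj : j < t.length) (u p' : Pat A V)
    (hdec : t[j] = u ++ p') (h1 : Hull t u) (h2 : Hull (t.set j p') u) (w : Pat A V) :
    Hull t w ↔ Hull (t.set j p') w := by
  constructor
  · apply Hull.mono
    intro p hp
    rcases mem_set_or hj p' hp with rfl | h
    · rw [hdec]
      exact .app _ _ h2 (.mem _ (List.mem_set hj p'))
    · exact .mem _ h
  · apply Hull.mono
    intro p hp
    rcases List.mem_or_eq_of_mem_set hp with h | rfl
    · exact .mem _ h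
    · refine .cancel u _ h1 ?_
      rw [← hdec]
      exact .mem _ (List.getElem_mem hj)

theorem PStep.hull {t t' : TP A V} (h : PStep t t') (w : Pat A V) : Hull t w ↔ Hull t' w := by
  cases h with
  | pre i j hi hj hij p' hdec hne =>
    refine hull_set hj _ p' hdec (.mem _ (List.getElem_mem hi)) (.mem _ ?_) w
    rw [List.mem_iff_getElem]
    exact ⟨i, by simpa using hi, by rw [List.getElem_set_ne (by omega)]⟩
  | cpre j hj a p' hdec =>
    exact hull_set hj [Sum.inl a] p' hdec (.letter a) (.letter a) w
  | eps j hj heps =>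
    constructor
    · apply Hull.mono
      intro p hp
      rcases mem_eraseIdx_or hj hp with rfl | h
      · rw [heps]; exact .nil
      · exact .mem _ h
    · apply Hull.mono
      intro p hp
      exact .mem _ (List.mem_of_mem_eraseIdx hp)

theorem PStep.length_le {t t' : TP A V} (h : PStep t t') : t'.length ≤ t.length := by
  cases h with
  | pre => simp
  | cpre => simp
  | eps j hj => rw [List.length_eraseIdx_of_lt hj]; omega

theorem sum_set_lt (t : TP A V) (j : ℕ) (hj : j < t.length) (p' : Pat A V)
    (h : p'.length < t[j].length) :
    ((t.set j p').map List.length).sum < (t.map List.length).sum := by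
  induction t generalizing j with
  | nil => simp at hj
  | cons x t ih =>
    cases j with
    | zero => simpa using h
    | succ j =>
      simp only [List.set_cons_succ, List.map_cons, List.sum_cons]
      have := ih j (by simpa using hj) (by simpa using h)
      omega

theorem sum_eraseIdx_le (t : TP A V) (j : ℕ) :
    ((t.eraseIdx j).map List.length).sum ≤ (t.map List.length).sum := by
  induction t generalizing j with
  | nil => simp
  | cons x t ih =>
    cases j with
    | zero => simp
    | succ j =>
      simp only [List.eraseIdx_cons_succ, List.map_cons, List.sum_cons]
      have := ih j
      omega

theorem PStep.measure {t t' : TP A V} (h : PStep t t') : tpMeasure t' < tpMeasure t := by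
  unfold tpMeasure
  cases h with
  | pre i j hi hj hij p' hdec hne =>
    have := sum_set_lt t j hj p' (by
      rw [hdec]; have := List.length_pos_iff.2 hne; simp only [List.length_append]; omega)
    simp only [List.length_set]; omega
  | cpre j hj a p' hdec =>
    have := sum_set_lt t j hj p' (by rw [hdec]; simp)
    simp only [List.length_set]; omega
  | eps j hj heps =>
    have := sum_eraseIdx_le t j
    rw [List.length_eraseIdx_of_lt hj]; omega

/-- Concatenations of components of `q` and letters. -/
def Gen (q : TP A V) (w : Pat A V) : Prop :=
  ∃ l : List (Pat A V), (∀ c ∈ l, c ∈ q ∨ ∃ a, c = [Sum.inl a]) ∧ w = l.flatten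

theorem gen_piece {q : TP A V} (hN : ¬ ∃ c, PStep q c) {c d : Pat A V}
    (hc : c ∈ q ∨ ∃ a, c = [Sum.inl a]) (hd : d ∈ q ∨ ∃ a, d = [Sum.inl a])
    (hcd : c <+: d) : c = d := by
  have hnil : ∀ p ∈ q, p ≠ [] := by
    rintro p hp rfl
    obtain ⟨k, hk, h⟩ := List.getElem_of_mem hp
    exact hN ⟨_, .eps q k hk h⟩
  have hlet : ∀ p ∈ q, ∀ a r, p ≠ Sum.inl a :: r := by
    rintro p hp a r rfl
    obtain ⟨k, hk, h⟩ := List.getElem_of_mem hp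
    exact hN ⟨_, .cpre q k hk a r h⟩
  rcases hc with hc | ⟨a, rfl⟩
  · rcases hd with hd | ⟨b, rfl⟩
    · obtain ⟨i, hi, hi'⟩ := List.getElem_of_mem hc
      obtain ⟨j, hj, hj'⟩ := List.getElem_of_mem hd
      by_cases hij : i = j
      · subst hij; rw [← hi', ← hj']
      · obtain ⟨r, hr⟩ := hcd
        exact absurd ⟨_, .pre q i j hi hj hij r (by rw [hi', hj', hr]) (by
          rw [hi']; exact hnil c hc)⟩ hN
    · have h0 := hnil c hc
      cases c with
      | nil => exact absurd rfl h0
      | cons s c =>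
        rw [List.cons_prefix_cons] at hcd
        exact absurd (by rw [hcd.1]) (hlet _ hc b c)
  · rcases hd with hd | ⟨b, rfl⟩
    · obtain ⟨r, hr⟩ := hcd
      exact absurd hr.symm (hlet d hd a r)
    · rw [List.cons_prefix_cons] at hcd
      rw [hcd.1]

theorem piece_ne {q : TP A V} (hN : ¬ ∃ c, PStep q c) {c : Pat A V}
    (hc : c ∈ q ∨ ∃ a, c = [Sum.inl a]) : c ≠ [] := by
  rintro rfl
  rcases hc with hc | ⟨a, h⟩
  · obtain ⟨k, hk, h⟩ := List.getElem_of_mem hc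
    exact hN ⟨_, .eps q k hk h⟩
  · simp at h

theorem gen_cancel {q : TP A V} (hN : ¬ ∃ c, PStep q c) (l : List (Pat A V))
    (hl : ∀ c ∈ l, c ∈ q ∨ ∃ a, c = [Sum.inl a]) (v : Pat A V) (hv : Gen q (l.flatten ++ v)) :
    Gen q v := by
  induction l with
  | nil => simpa using hv
  | cons c l ih =>
    obtain ⟨l', hl', he⟩ := hv
    have hc := hl c (by simp)
    cases l' with
    | nil => 
      have := piece_ne hN hc
      simp at he
      exact absurd he.1 this
    | cons d l' =>
      have hd := hl' d (by simp)
      simp only [List.flatten_cons, List.append_assoc] at he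
      have hcd : c = d := by
        have h1 : c <+: c ++ (l.flatten ++ v) := ⟨_, rfl⟩
        have h2 : d <+: c ++ (l.flatten ++ v) := ⟨_, he.symm⟩
        rcases le_total c.length d.length with h | h
        · exact gen_piece hN hc hd (List.prefix_of_prefix_length_le h1 h2 h)
        · exact (gen_piece hN hd hc (List.prefix_of_prefix_length_le h2 h1 h)).symm
      subst hcd
      refine ih (fun c hc => hl c (by simp [hc])) ⟨l', fun c hc => hl' c (by simp [hc]), ?_⟩
      exact List.append_cancel_left he

theorem hull_gen {q : TP A V} (hN : ¬ ∃ c, PStep q c) {w : Pat A V} (h : Hull q w) :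
    Gen q w := by
  induction h with
  | nil => exact ⟨[], by simp, by simp⟩
  | letter a => exact ⟨[[Sum.inl a]], by simp, by simp⟩
  | mem p hp => exact ⟨[p], by simp [hp], by simp⟩
  | app u v _ _ hu hv =>
    obtain ⟨l, hl, rfl⟩ := hu
    obtain ⟨l', hl', rfl⟩ := hv
    refine ⟨l ++ l', ?_, by simp⟩
    intro c hc
    rcases List.mem_append.1 hc with h | h
    · exact hl c h
    · exact hl' c h
  | cancel u v _ _ hu huv =>
    obtain ⟨l, hl, rfl⟩ := hu
    exact gen_cancel hN l hl v huv

theorem hull_vars {ys : List V} {w : Pat A V} (h : Hull (trivTP ys) w) :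
    ∀ y, Sum.inr y ∈ w → y ∈ ys := by
  induction h with
  | nil => simp
  | letter a => simp
  | mem p hp =>
    simp only [trivTP, List.mem_map] at hp
    obtain ⟨z, hz, rfl⟩ := hp
    intro y hy
    simp at hy
    rwa [hy]
  | app u v _ _ hu hv =>
    intro y hy
    rcases List.mem_append.1 hy with h | h
    · exact hu y h
    · exact hv y h
  | cancel u v _ _ hu huv =>
    intro y hy
    exact huv y (List.mem_append_right _ hy)

/-- A ⇒-normal tuple pattern with the same hull as `ys` consists of distinct variables. -/
theorem normal_vars {q : TP A V} (hN : ¬ ∃ c, PStep q c) {ys : List V}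
    (hH : ∀ w, Hull q w ↔ Hull (trivTP ys) w) :
    q.Nodup ∧ ∀ p ∈ q, ∃ y, p = [Sum.inr y] := by
  constructor
  · rw [List.nodup_iff_injective_get]
    intro i j hij
    by_contra hne
    simp only [List.get_eq_getElem] at hij
    refine hN ⟨_, .pre q i j i.2 j.2 (fun h => hne (Fin.ext h)) [] (by simp [hij]) ?_⟩
    exact piece_ne hN (Or.inl (List.getElem_mem _))
  · intro p hp
    have hpv := hull_vars ((hH p).1 (.mem p hp))
    cases p with
    | nil => exact absurd rfl (piece_ne hN (Or.inl hp))
    | cons s r =>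
      cases s with
      | inl a =>
        obtain ⟨k, hk, h⟩ := List.getElem_of_mem hp
        exact absurd ⟨_, .cpre q k hk a r h⟩ hN
      | inr y =>
        have hy : y ∈ ys := hpv y (by simp)
        have h1 : Hull q [Sum.inr y] :=
          (hH _).2 (.mem _ (by simp only [trivTP, List.mem_map]; exact ⟨y, hy, rfl⟩))
        obtain ⟨l, hl, he⟩ := hull_gen hN h1
        cases l with
        | nil => simp at he
        | cons c l =>
          have hc := hl c (by simp)
          have hcn := piece_ne hN hc
          cases c with
          | nil => exact absurd rfl hcn
          | cons s' c =>
            simp only [List.flatten_cons, List.cons_append, List.cons.injEq] at he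
            obtain ⟨rfl, he⟩ := he
            have hce := (List.append_eq_nil_iff.1 he.symm).1
            subst hce
            have := gen_piece hN hc (Or.inl hp) (by simp)
            exact ⟨y, this.symm⟩

/-- Two-row code for variables. -/
structure Code (ys : List V) (W : ℕ) (θ₁ θ₂ : V → Word A) : Prop where
  spec : ∃ a b : A, a ≠ b ∧ ∀ y, ∃ w, θ₁ y = a :: w ∧ θ₂ y = b :: w ∧ w.length = W
  inj : ∀ y ∈ ys, ∀ z ∈ ys, θ₁ y = θ₁ z → y = z

/-- The column of a pattern. -/
def col (θ₁ θ₂ : V → Word A) (p : Pat A V) : Col A := [substPatW θ₁ p, substPatW θ₂ p]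

theorem sp_nil (θ : V → Word A) : substPatW θ ([] : Pat A V) = [] := rfl

theorem sp_inl (θ : V → Word A) (a : A) (p : Pat A V) :
    substPatW θ (Sum.inl a :: p) = a :: substPatW θ p := by simp [substPatW]

theorem sp_inr (θ : V → Word A) (y : V) (p : Pat A V) :
    substPatW θ (Sum.inr y :: p) = θ y ++ substPatW θ p := by simp [substPatW]

theorem sp_app (θ : V → Word A) (p q : Pat A V) :
    substPatW θ (p ++ q) = substPatW θ p ++ substPatW θ q := by simp [substPatW]

theorem code_cancel {ys : List V} {W : ℕ} {θ₁ θ₂ : V → Word A} (hC : Code ys W θ₁ θ₂)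
    (p q : Pat A V) (hp : ∀ y, Sum.inr y ∈ p → y ∈ ys) (hq : ∀ y, Sum.inr y ∈ q → y ∈ ys)
    (s₁ s₂ : Word A) (h₁ : substPatW θ₁ q = substPatW θ₁ p ++ s₁)
    (h₂ : substPatW θ₂ q = substPatW θ₂ p ++ s₂) :
    ∃ p', q = p ++ p' ∧ s₁ = substPatW θ₁ p' ∧ s₂ = substPatW θ₂ p' := by
  induction p generalizing q with
  | nil => exact ⟨q, rfl, h₁.symm, h₂.symm⟩
  | cons s p ih =>
    obtain ⟨a, b, hab, hsp⟩ := hC.spec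
    have key : ∃ q', q = s :: q' := by
      cases q with
      | nil =>
        cases s with
        | inl c => simp [sp_nil, sp_inl] at h₁
        | inr y => 
          obtain ⟨w, hw, -⟩ := hsp y
          simp [sp_nil, sp_inr, hw] at h₁
      | cons s' q =>
        refine ⟨q, ?_⟩
        cases s with
        | inl c =>
          cases s' with
          | inl d =>
            simp only [sp_inl, List.cons_append, List.cons.injEq] at h₁
            rw [h₁.1]
          | inr y =>
            obtain ⟨w, hw, hw', -⟩ := hsp y
            simp only [sp_inl, sp_inr, hw, hw', List.cons_append, List.cons.injEq] at h₁ h₂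
            exact absurd (h₁.1.trans h₂.1.symm) hab
        | inr z =>
          obtain ⟨v, hv, hv', hvl⟩ := hsp z
          cases s' with
          | inl d =>
            simp only [sp_inl, sp_inr, hv, hv', List.cons_append, List.cons.injEq] at h₁ h₂
            exact absurd (h₁.1.symm.trans h₂.1) hab
          | inr y =>
            obtain ⟨w, hw, hw', hwl⟩ := hsp y
            simp only [sp_inr, List.append_assoc] at h₁
            have := (List.append_inj h₁ (by simp [hw, hv, hwl, hvl])).1
            rw [hC.inj y (hq y (by simp)) z (hp z (by simp)) this]
    obtain ⟨q', rfl⟩ := key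
    have := ih q' (fun y hy => hp y (by simp [hy])) (fun y hy => hq y (by simp [hy]))
      (by
        cases s with
        | inl c => simpa [sp_inl] using h₁
        | inr z => simpa [sp_inr] using h₁)
      (by
        cases s with
        | inl c => simpa [sp_inl] using h₂
        | inr z => simpa [sp_inr] using h₂)
    obtain ⟨p', rfl, h3, h4⟩ := this
    exact ⟨p', rfl, h3, h4⟩

theorem code_nil {ys : List V} {W : ℕ} {θ₁ θ₂ : V → Word A} (hC : Code ys W θ₁ θ₂)
    (q : Pat A V) : allEps (col θ₁ θ₂ q) ↔ q = [] := by
  constructor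
  · intro h
    have h1 := h (substPatW θ₁ q) (by simp [col])
    cases q with
    | nil => rfl
    | cons s q =>
      cases s with
      | inl c => simp [sp_inl] at h1
      | inr y =>
        obtain ⟨a, b, hab, hsp⟩ := hC.spec
        obtain ⟨w, hw, -⟩ := hsp y
        simp [sp_inr, hw] at h1
  · rintro rfl
    simp [allEps, col, sp_nil]

/-- Pattern-valued substitution. -/
def substP (f : V → Pat A V) (p : Pat A V) : Pat A V :=
  p.flatMap (Sum.elim (fun a => [Sum.inl a]) f)

theorem substP_nil (f : V → Pat A V) : substP f [] = [] := rfl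

theorem substP_inl (f : V → Pat A V) (a : A) (p : Pat A V) :
    substP f (Sum.inl a :: p) = Sum.inl a :: substP f p := rfl

theorem substP_inr (f : V → Pat A V) (y : V) (p : Pat A V) :
    substP f (Sum.inr y :: p) = f y ++ substP f p := rfl

theorem substP_congr {f g : V → Pat A V} (p : Pat A V) (h : ∀ y, Sum.inr y ∈ p → f y = g y) :
    substP f p = substP g p := by
  induction p with
  | nil => rfl
  | cons s p ih =>
    have := ih (fun y hy => h y (by simp [hy]))
    unfold substP at this ⊢
    rw [List.flatMap_cons, List.flatMap_cons, this]
    cases s with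
    | inl a => rfl
    | inr y => simp [h y (by simp)]

theorem substP_substVar [DecidableEq A] [DecidableEq V] (f : V → Pat A V) (x : V)
    (r : Pat A V) (p : Pat A V) :
    substP f (substVar x r p) = substP (Function.update f x (substP f r)) p := by
  induction p with
  | nil => rfl
  | cons s p ih =>
    have e1 : substVar x r (s :: p) = (if s = Sum.inr x then r else [s]) ++ substVar x r p := by
      simp [substVar]
    have e2 : ∀ g : V → Pat A V, ∀ u v, substP g (u ++ v) = substP g u ++ substP g v := by
      intro g u v; simp [substP]
    rw [e1, e2, ih, show s :: p = [s] ++ p from rfl, e2 _ [s]]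
    congr 1
    cases s with
    | inl a =>
      rw [if_neg (by simp)]
      rfl
    | inr y =>
      by_cases h : y = x
      · subst h
        rw [if_pos rfl, substP_inr, Function.update_self, substP_nil, List.append_nil]
      · rw [if_neg (by simpa using h), substP_inr, substP_inr, Function.update_of_ne h]
        rfl

theorem mem_substVar [DecidableEq A] [DecidableEq V] {x y : V} {r p : Pat A V}
    (h : Sum.inr y ∈ substVar x r p) :
    Sum.inr y ∈ r ∨ (y ≠ x ∧ Sum.inr y ∈ p) := by
  simp only [substVar, List.mem_flatten, List.mem_map] at h
  obtain ⟨l, ⟨s, hs, rfl⟩, hy⟩ := h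
  split_ifs at hy with hc
  · exact Or.inl hy
  · simp only [List.mem_singleton] at hy
    subst hy
    exact Or.inr ⟨fun h => hc (by rw [h]), hs⟩

/-- The simulation invariant. -/
structure Inv (t : TP A V) (ys : List V) (θ₁ θ₂ : V → Word A) (tc : TP A V)
    (E : List (V × Col A)) (f : V → Pat A V) : Prop where
  nodup : (E.map Prod.fst).Nodup
  cols : ∀ e ∈ E, e.2 = col θ₁ θ₂ (f e.1)
  vars : ∀ p ∈ tc, ∀ y, Sum.inr y ∈ p → y ∈ E.map Prod.fst
  subst : tc.map (substP f) = t
  hull : ∀ w, Hull (E.map (fun e => f e.1)) w ↔ Hull (trivTP ys) w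

/-- Common part of the two prefix steps. -/
theorem inv_set [DecidableEq A] [DecidableEq V] {t : TP A V} {ys : List V}
    {θ₁ θ₂ : V → Word A} {tc : TP A V} {E : List (V × Col A)} {f : V → Pat A V}
    (hI : Inv t ys θ₁ θ₂ tc E f) (j : ℕ) (hj : j < E.length) (s : A ⊕ V) (p' : Pat A V)
    (x' : V) (hx1 : x' ∉ E.map Prod.fst) (hx2 : Sum.inr x' ∉ tc.flatten)
    (hs : ∀ y, s = Sum.inr y → y ∈ E.map Prod.fst ∧ y ≠ (E[j]'hj).1)
    (hdec : f (E[j]'hj).1 = substP f [s] ++ p')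
    (hP : PStep (E.map (fun e => f e.1)) ((E.map (fun e => f e.1)).set j p')) :
    ∃ f', Inv t ys θ₁ θ₂ (substVarTP (E[j]'hj).1 [s, Sum.inr x'] tc)
        (E.set j (x', col θ₁ θ₂ p')) f' ∧
      PStep (E.map (fun e => f e.1)) ((E.set j (x', col θ₁ θ₂ p')).map (fun e => f' e.1)) := by
  have hne : ∀ e ∈ E, e.1 ≠ x' := by
    intro e he h
    exact hx1 (List.mem_map.2 ⟨e, he, h⟩)
  have hmap : (E.set j (x', col θ₁ θ₂ p')).map (fun e => Function.update f x' p' e.1)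
      = (E.map (fun e => f e.1)).set j p' := by
    rw [List.map_set]
    simp only [Function.update_self]
    congr 1
    apply List.map_congr_left
    intro e he
    rw [Function.update_of_ne (hne e he)]
  refine ⟨Function.update f x' p', ⟨?_, ?_, ?_, ?_, ?_⟩, ?_⟩
  · rw [List.map_set]
    exact hI.nodup.set hx1
  · intro e he
    rcases List.mem_or_eq_of_mem_set he with h | rfl
    · rw [Function.update_of_ne (hne e h)]
      exact hI.cols e h
    · simp
  · intro p hp y hy
    simp only [substVarTP, List.mem_map] at hp
    obtain ⟨p, hp, rfl⟩ := hp
    rw [List.map_set]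
    have hold : ∀ y, y ∈ E.map Prod.fst → y ≠ (E[j]'hj).1 → y ∈ (E.map Prod.fst).set j x' := by
      intro y hy hyj
      rcases mem_set_or (t := E.map Prod.fst) (j := j) (by simpa using hj) x' hy with h | h
      · exact absurd (by simpa using h) hyj
      · exact h
    rcases mem_substVar hy with h | ⟨h1, h2⟩
    · simp only [List.mem_cons, List.not_mem_nil, or_false] at h
      rcases h with h | h
      · obtain ⟨h1, h2⟩ := hs y h.symm
        exact hold y h1 h2
      · cases h
        exact List.mem_set (by simpa using hj) _
    · exact hold y (hI.vars p hp y h2) h1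
  · rw [← hI.subst, substVarTP, List.map_map]
    apply List.map_congr_left
    intro p hp
    rw [Function.comp_apply, substP_substVar]
    apply substP_congr
    intro y hy
    have hyx : y ≠ x' := by
      rintro rfl
      exact hx2 (List.mem_flatten.2 ⟨p, hp, hy⟩)
    by_cases h : y = (E[j]'hj).1
    · subst h
      rw [Function.update_self, hdec]
      cases s with
      | inl a =>
        simp only [substP_inl, substP_inr, substP_nil, Function.update_self, List.append_nil,
          List.cons_append, List.nil_append]
      | inr z =>
        have hz : z ≠ x' := fun h => hx1 (h ▸ (hs z rfl).1)
        simp only [substP_inr, substP_nil, Function.update_self, List.append_nil,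
          Function.update_of_ne hz]
    · rw [Function.update_of_ne h, Function.update_of_ne hyx]
  · intro w
    rw [hmap, ← hP.hull w]
    exact hI.hull w
  · rw [hmap]; exact hP

theorem inv_vars {t : TP A V} {ys : List V}
    {θ₁ θ₂ : V → Word A} {tc : TP A V} {E : List (V × Col A)} {f : V → Pat A V}
    (hI : Inv t ys θ₁ θ₂ tc E f) {e : V × Col A} (he : e ∈ E) :
    ∀ y, Sum.inr y ∈ f e.1 → y ∈ ys :=
  hull_vars ((hI.hull _).1 (.mem _ (List.mem_map.2 ⟨e, he, rfl⟩)))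

theorem inv_ne {t : TP A V} {ys : List V}
    {θ₁ θ₂ : V → Word A} {tc : TP A V} {E : List (V × Col A)} {f : V → Pat A V}
    (hI : Inv t ys θ₁ θ₂ tc E f) {i j : ℕ} (hi : i < E.length) (hj : j < E.length)
    (hij : i ≠ j) : (E[i]'hi).1 ≠ (E[j]'hj).1 := by
  intro h
  have := (List.Nodup.getElem_inj_iff hI.nodup (i := i) (j := j) (hi := by simpa using hi)
    (hj := by simpa using hj)).1 (by simpa using h)
  exact hij this

/-- Every data step is simulated by a pattern step. -/
theorem inv_step [DecidableEq A] [DecidableEq V] {t : TP A V} {ys : List V} {W : ℕ}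
    {θ₁ θ₂ : V → Word A} (hC : Code ys W θ₁ θ₂) {tc : TP A V} {Θ : DSub A V}
    {f : V → Pat A V} (hI : Inv t ys θ₁ θ₂ tc Θ.entries f) {c : TP A V × DSub A V}
    (hS : Step (tc, Θ) c) :
    ∃ f', Inv t ys θ₁ θ₂ c.1 c.2.entries f' ∧
      PStep (Θ.entries.map (fun e => f e.1)) (c.2.entries.map (fun e => f' e.1)) := by
  obtain ⟨m, E⟩ := Θ
  cases hS with
  | pre _ _ _ i j hi hj hij s hslen hpre hne x' hx1 hx2 =>
    simp only at hI ⊢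
    have hiE := List.getElem_mem hi
    have hjE := List.getElem_mem hj
    rw [hI.cols _ hiE] at hslen hpre hne
    rw [hI.cols _ hjE] at hpre
    rw [code_nil hC] at hne
    match s, hslen with
    | [s₁, s₂], _ =>
      simp only [col, List.zipWith_cons_cons, List.zipWith_nil_left, List.cons.injEq,
        and_true] at hpre
      obtain ⟨p', hdec, rfl, rfl⟩ := code_cancel hC _ _ (inv_vars hI hiE) (inv_vars hI hjE)
        s₁ s₂ hpre.1 hpre.2
      refine inv_set hI j hj (Sum.inr E[i].1) p' x' hx1 hx2 ?_ ?_ ?_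
      · intro y hy
        cases hy
        exact ⟨List.mem_map.2 ⟨_, hiE, rfl⟩, inv_ne hI hi hj hij⟩
      · simpa [substP] using hdec
      · exact .pre _ i j (by simpa using hi) (by simpa using hj) hij p' (by simpa using hdec)
          (by simpa using hne)
  | cpre _ _ _ j hj a s hpre x' hx1 hx2 =>
    simp only at hI ⊢
    have hjE := List.getElem_mem hj
    rw [hI.cols _ hjE] at hpre
    have hlen : s.length = 2 := by
      have := congrArg List.length hpre
      simpa [col] using this.symm
    match s, hlen with
    | [s₁, s₂], _ =>
      simp only [col, List.map_cons, List.map_nil, List.cons.injEq, and_true] at hpre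
      obtain ⟨p', hdec, rfl, rfl⟩ := code_cancel hC [Sum.inl a] _ (by simp) (inv_vars hI hjE)
        s₁ s₂ (by simpa [sp_inl, sp_nil] using hpre.1) (by simpa [sp_inl, sp_nil] using hpre.2)
      refine inv_set hI j hj (Sum.inl a) p' x' hx1 hx2 ?_ ?_ ?_
      · intro y hy
        cases hy
      · simpa [substP] using hdec
      · exact .cpre _ j (by simpa using hj) a p' (by simpa using hdec)
  | eps _ _ _ j hj heps =>
    simp only at hI ⊢
    have hjE := List.getElem_mem hj
    rw [hI.cols _ hjE, code_nil hC] at heps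
    have hP : PStep (E.map (fun e => f e.1)) ((E.eraseIdx j).map (fun e => f e.1)) := by
      rw [← List.eraseIdx_map]
      exact .eps _ j (by simpa using hj) (by simpa using heps)
    refine ⟨f, ⟨?_, ?_, ?_, ?_, ?_⟩, hP⟩
    · rw [← List.eraseIdx_map]
      exact hI.nodup.sublist (List.eraseIdx_sublist _ _)
    · intro e he
      exact hI.cols e (List.mem_of_mem_eraseIdx he)
    · intro p hp y hy
      simp only [substVarTP, List.mem_map] at hp
      obtain ⟨p, hp, rfl⟩ := hp
      rcases mem_substVar hy with h | ⟨h1, h2⟩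
      · simp at h
      · rw [← List.eraseIdx_map]
        rcases mem_eraseIdx_or (t := E.map Prod.fst) (j := j) (by simpa using hj)
          (hI.vars p hp y h2) with h | h
        · exact absurd (by simpa using h) h1
        · exact h
    · rw [← hI.subst, substVarTP, List.map_map]
      apply List.map_congr_left
      intro p hp
      rw [Function.comp_apply, substP_substVar]
      apply substP_congr
      intro y hy
      by_cases h : y = (E[j]'hj).1
      · subst h
        rw [Function.update_self, heps]; rfl
      · rw [Function.update_of_ne h]
    · intro w
      rw [← hP.hull w]
      exact hI.hull w

theorem exists_fresh [Infinite V] (E : List (V × Col A)) (tc : TP A V) :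
    ∃ x' : V, x' ∉ E.map Prod.fst ∧ Sum.inr x' ∉ tc.flatten := by
  classical
  have h1 : {x : V | x ∈ E.map Prod.fst}.Finite := List.finite_toSet _
  have h2 : {x : V | Sum.inr x ∈ tc.flatten}.Finite :=
    (List.finite_toSet tc.flatten).preimage (f := (Sum.inr : V → A ⊕ V))
      Sum.inr_injective.injOn
  obtain ⟨x, hx⟩ := (h1.union h2).exists_notMem
  simp only [Set.mem_union, not_or] at hx
  exact ⟨x, hx.1, hx.2⟩

/-- A data configuration without steps is a ⇒-normal tuple pattern. -/
theorem inv_normal [DecidableEq A] [DecidableEq V] [Infinite V] {t : TP A V} {ys : List V}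
    {W : ℕ} {θ₁ θ₂ : V → Word A} (hC : Code ys W θ₁ θ₂) {tc : TP A V} {Θ : DSub A V}
    {f : V → Pat A V} (hI : Inv t ys θ₁ θ₂ tc Θ.entries f)
    (hN : ¬ ∃ c, Step (tc, Θ) c) : ¬ ∃ c, PStep (Θ.entries.map (fun e => f e.1)) c := by
  obtain ⟨m, E⟩ := Θ
  rintro ⟨c, hc⟩
  apply hN
  simp only at hI hc
  obtain ⟨x', hx1, hx2⟩ := exists_fresh E tc
  cases hc with
  | pre i j hi hj hij p' hdec hne =>
    have hi' : i < E.length := by simpa using hi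
    have hj' : j < E.length := by simpa using hj
    simp only [List.getElem_map] at hdec hne
    refine ⟨_, .pre tc m E i j hi' hj' hij (col θ₁ θ₂ p') ?_ ?_ ?_ x' hx1 hx2⟩
    · rw [hI.cols _ (List.getElem_mem hi')]; rfl
    · rw [hI.cols _ (List.getElem_mem hi'), hI.cols _ (List.getElem_mem hj'), hdec]
      simp [col, sp_app]
    · rw [hI.cols _ (List.getElem_mem hi'), code_nil hC]
      exact hne
  | cpre j hj a p' hdec =>
    have hj' : j < E.length := by simpa using hj
    simp only [List.getElem_map] at hdec
    refine ⟨_, .cpre tc m E j hj' a (col θ₁ θ₂ p') ?_ x' hx1 hx2⟩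
    rw [hI.cols _ (List.getElem_mem hj'), hdec]
    simp [col, sp_inl]
  | eps j hj heps =>
    have hj' : j < E.length := by simpa using hj
    simp only [List.getElem_map] at heps
    refine ⟨_, .eps tc m E j hj' ?_⟩
    rw [hI.cols _ (List.getElem_mem hj'), code_nil hC]
    exact heps

/-- In a terminal configuration the pattern is a renaming of `t`. -/
theorem inv_terminal [DecidableEq A] [DecidableEq V] [Infinite V] {t : TP A V} {ys : List V}
    {W : ℕ} {θ₁ θ₂ : V → Word A} (hC : Code ys W θ₁ θ₂) {tc : TP A V} {Θ : DSub A V}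
    {f : V → Pat A V} (hI : Inv t ys θ₁ θ₂ tc Θ.entries f)
    (hN : ¬ ∃ c, Step (tc, Θ) c) : ∃ σ : Equiv.Perm V, tc = renameTP σ t := by
  obtain ⟨hnd, hv⟩ := normal_vars (inv_normal hC hI hN) hI.hull
  obtain ⟨m, E⟩ := Θ
  simp only at hI hnd hv
  have hv' : ∀ i : Fin E.length, ∃ y, f (E[i.1]).1 = [Sum.inr y] := by
    intro i
    exact hv _ (List.mem_map.2 ⟨_, List.getElem_mem i.2, rfl⟩)
  choose g hg using hv'
  let X : Fin E.length ↪ V := ⟨g, by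
    intro i j hij
    have h : f (E[i.1]).1 = f (E[j.1]).1 := by rw [hg, hg, hij]
    have := (List.Nodup.getElem_inj_iff hnd (i := i.1) (j := j.1) (hi := by simp)
      (hj := by simp)).1 (by simpa using h)
    exact Fin.ext this⟩
  let Y : Fin E.length ↪ V := ⟨fun i => (E[i.1]).1, by
    intro i j hij
    by_contra hne
    exact inv_ne hI i.2 j.2 (fun h => hne (Fin.ext h)) hij⟩
  obtain ⟨σ, hσ⟩ := (Equiv.Perm.isMultiplyPretransitive V E.length).exists_smul_eq X Y
  have hσ' : ∀ i : Fin E.length, σ (g i) = (E[i.1]).1 := by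
    intro i
    have := congrArg (fun Z : Fin E.length ↪ V => Z i) hσ
    exact this
  refine ⟨σ, ?_⟩
  rw [← hI.subst, renameTP, List.map_map]
  conv_lhs => rw [← List.map_id tc]
  apply List.map_congr_left
  intro p hp
  have hpv := hI.vars p hp
  clear hp
  simp only [Function.comp_apply, id]
  induction p with
  | nil => rfl
  | cons s p ih =>
    have h := ih (fun y hy => hpv y (by simp [hy]))
    unfold substP at h ⊢
    rw [List.flatMap_cons, List.map_append, ← h]
    cases s with
    | inl a => simp
    | inr y =>
      obtain ⟨e, he, rfl⟩ := List.mem_map.1 (hpv y (by simp))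
      obtain ⟨i, hi, rfl⟩ := List.getElem_of_mem he
      have h1 := hg ⟨i, hi⟩
      have h2 := hσ' ⟨i, hi⟩
      simp only at h1 h2
      simp [h1, h2]

theorem sp_rename (ρ : V → V) (θ : V → Word A) (p : Pat A V) :
    substPatW θ (p.map (Sum.map id ρ)) = substPatW (θ ∘ ρ) p := by
  induction p with
  | nil => rfl
  | cons s p ih => cases s <;> simp [sp_inl, sp_inr, ih]

theorem lang_rename (σ : Equiv.Perm V) (t : TP A V) : lang t = lang (renameTP σ t) := by
  ext w
  simp only [lang, Set.mem_ofPred_eq, renameTP, List.map_map]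
  constructor
  · rintro ⟨θ, rfl⟩
    refine ⟨θ ∘ σ.symm, ?_⟩
    apply List.map_congr_left
    intro p _
    rw [Function.comp_apply, sp_rename]
    congr 1
    funext x; simp
  · rintro ⟨θ, rfl⟩
    refine ⟨θ ∘ σ, ?_⟩
    apply List.map_congr_left
    intro p _
    rw [Function.comp_apply, sp_rename]

theorem inv_star [DecidableEq A] [DecidableEq V] {t : TP A V} {ys : List V} {W : ℕ}
    {θ₁ θ₂ : V → Word A} (hC : Code ys W θ₁ θ₂) {c c' : TP A V × DSub A V}
    (h : Relation.ReflTransGen Step c c') {f : V → Pat A V}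
    (hI : Inv t ys θ₁ θ₂ c.1 c.2.entries f) :
    ∃ f', Inv t ys θ₁ θ₂ c'.1 c'.2.entries f' := by
  induction h with
  | refl => exact ⟨f, hI⟩
  | tail _ hs ih =>
    obtain ⟨f', hf'⟩ := ih
    obtain ⟨f'', h, -⟩ := inv_step hC hf' hs
    exact ⟨f'', h⟩

theorem inv_exists [DecidableEq A] [DecidableEq V] {t : TP A V} {ys : List V} {W : ℕ}
    {θ₁ θ₂ : V → Word A} (hC : Code ys W θ₁ θ₂) (k : ℕ) :
    ∀ (c : TP A V × DSub A V) (f : V → Pat A V), Inv t ys θ₁ θ₂ c.1 c.2.entries f →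
    tpMeasure (c.2.entries.map (fun e => f e.1)) ≤ k →
    ∃ c', Relation.ReflTransGen Step c c' ∧ ¬ ∃ d, Step c' d := by
  induction k with
  | zero =>
    intro c f hI hk
    refine ⟨c, .refl, ?_⟩
    rintro ⟨d, hd⟩
    obtain ⟨f', -, h⟩ := inv_step hC hI hd
    have := h.measure
    omega
  | succ k ih =>
    intro c f hI hk
    by_cases hd : ∃ d, Step c d
    · obtain ⟨d, hd⟩ := hd
      obtain ⟨f', hI', h⟩ := inv_step hC hI hd
      have := h.measure
      obtain ⟨c', h1, h2⟩ := ih d f' hI' (by omega)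
      exact ⟨c', h1.head hd, h2⟩
    · exact ⟨c, .refl, hd⟩

/-- Fixed-width binary expansions. -/
def bin (a b : A) (W k : ℕ) : Word A :=
  (List.range W).map (fun i => if k.testBit i then a else b)

theorem bin_inj {a b : A} (hab : a ≠ b) {W k l : ℕ} (hk : k < 2 ^ W) (hl : l < 2 ^ W)
    (h : bin a b W k = bin a b W l) : k = l := by
  apply Nat.eq_of_testBit_eq
  intro i
  by_cases hi : i < W
  · have := List.map_inj_left.1 h i (List.mem_range.2 hi)
    cases h1 : k.testBit i <;> cases h2 : l.testBit i <;> simp_all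
  · have hW : 2 ^ W ≤ 2 ^ i := Nat.pow_le_pow_right (by norm_num) (by omega)
    rw [Nat.testBit_lt_two_pow (by omega), Nat.testBit_lt_two_pow (by omega)]

theorem exists_code [DecidableEq V] [Nontrivial A] (ys : List V) (W : ℕ)
    (h : ys.length ≤ 2 ^ W) : ∃ θ₁ θ₂ : V → Word A, Code ys W θ₁ θ₂ := by
  obtain ⟨a, b, hab⟩ := exists_pair_ne A
  refine ⟨fun y => a :: bin a b W (ys.idxOf y), fun y => b :: bin a b W (ys.idxOf y),
    ⟨a, b, hab, fun y => ⟨_, rfl, rfl, by simp [bin]⟩⟩, ?_⟩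
  intro y hy z hz hyz
  simp only [List.cons.injEq, true_and] at hyz
  have h1 := List.idxOf_lt_length_of_mem hy
  have h2 := List.idxOf_lt_length_of_mem hz
  exact (List.idxOf_inj hy).1 (bin_inj hab (by omega) (by omega) hyz)

theorem sp_length {W : ℕ} {θ : V → Word A} (h : ∀ y, (θ y).length = W + 1) (p : Pat A V) :
    (substPatW θ p).length ≤ p.length * (W + 1) := by
  induction p with
  | nil => simp [sp_nil]
  | cons s p ih =>
    cases s with
    | inl a => simp only [sp_inl, List.length_cons]; nlinarith
    | inr y => simp only [sp_inr, List.length_cons, List.length_append, h]; nlinarith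

theorem size_bound {W : ℕ} {θ₁ θ₂ : V → Word A} (h1 : ∀ y, (θ₁ y).length = W + 1)
    (h2 : ∀ y, (θ₂ y).length = W + 1) (t : TP A V) :
    dataSize (t.map (col θ₁ θ₂)) ≤ 2 * ((t.map List.length).sum + t.length) * (W + 1) := by
  induction t with
  | nil => simp [dataSize]
  | cons p t ih =>
    have e : dataSize ((p :: t).map (col θ₁ θ₂)) =
        ((substPatW θ₁ p).length + 1 + ((substPatW θ₂ p).length + 1)) +
          dataSize (t.map (col θ₁ θ₂)) := by
      simp [dataSize, col]; omega
    rw [e]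
    have := sp_length h1 p
    have := sp_length h2 p
    simp only [List.map_cons, List.sum_cons, List.length_cons]
    nlinarith

theorem inv_init [DecidableEq V] {t : TP A V} {ys : List V} {θ₁ θ₂ : V → Word A}
    (hH : ∀ w, Hull t w ↔ Hull (trivTP ys) w) (xs : List V) (hxs : xs.Nodup)
    (hlen : xs.length = t.length) :
    ∃ f, Inv t ys θ₁ θ₂ (trivTP xs) (xs.zip (t.map (col θ₁ θ₂))) f := by
  have hfst : (xs.zip (t.map (col θ₁ θ₂))).map Prod.fst = xs :=
    List.map_fst_zip (by simp [hlen])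
  have hf : xs.map (fun x => t.getD (xs.idxOf x) []) = t := by
    apply List.ext_getElem
    · simpa using hlen
    · intro i h1 h2
      simp only [List.length_map] at h1
      simp [hxs.idxOf_getElem i h1, h2]
  refine ⟨fun x => t.getD (xs.idxOf x) [], ⟨?_, ?_, ?_, ?_, ?_⟩⟩
  · rw [hfst]; exact hxs
  · intro e he
    obtain ⟨i, hi, rfl⟩ := List.getElem_of_mem he
    have hi' : i < xs.length := by simp at hi; omega
    simp [hxs.idxOf_getElem i hi', ← hlen, hi']
  · intro p hp y hy
    rw [hfst]
    simp only [trivTP, List.mem_map] at hp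
    obtain ⟨x, hx, rfl⟩ := hp
    simp at hy
    rwa [hy]
  · rw [trivTP, List.map_map]
    conv_rhs => rw [← hf]
    apply List.map_congr_left
    intro x _
    simp [substP]
  · intro w
    have : (xs.zip (t.map (col θ₁ θ₂))).map (fun e => t.getD (xs.idxOf e.1) []) = t := by
      conv_rhs => rw [← hf, ← hfst, List.map_map]
      rw [hfst]
      rfl
    rw [this]
    exact hH w

/-- **Size of learning data.**
There is a constant `C` such that for every solvable tuple pattern `t = (p₁,…,pₙ)` with
`|p₁⋯pₙ| = mlen` there is learning data `M` with two rows such that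
(i) `size(M) ≤ C·(mlen+n)·(⌈log₂ n⌉+1)`;
(ii) `((x₁,…,xₙ), [M/x⃗]) ⟶* (t, Θ)` (up to renaming of the variables of `t`) for some `Θ`
with `(t, Θ)` admitting no further step; and
(iii) whenever `((x₁,…,xₙ), [M/x⃗]) ⟶* (t′, Θ′)` with `(t′, Θ′)` admitting no further
step, `L(t) = L(t′)`. -/
theorem data_size
    [DecidableEq A] [DecidableEq V] [Nontrivial A] [Countable V] [Infinite V] :
    ∃ C : ℕ, ∀ (t : TP A V) (n mlen : ℕ),
      t.length = n → (t.map List.length).sum = mlen → Solvable t →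
      ∃ M : Data A, M.length = n ∧ (∀ c ∈ M, c.length = 2) ∧
        dataSize M ≤ C * (mlen + n) * (Nat.clog 2 n + 1) ∧
        ∀ xs : List V, xs.Nodup → xs.length = n →
          (∃ (ρ : V → V) (Θ : DSub A V), Function.Injective ρ ∧
              Relation.ReflTransGen Step (trivTP xs, ⟨2, xs.zip M⟩) (renameTP ρ t, Θ) ∧
              ¬ ∃ c, Step (renameTP ρ t, Θ) c) ∧
          (∀ (t' : TP A V) (Θ' : DSub A V),
              Relation.ReflTransGen Step (trivTP xs, ⟨2, xs.zip M⟩) (t', Θ') →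
              (¬ ∃ c, Step (t', Θ') c) → lang t = lang t') := by
  refine ⟨2, ?_⟩
  rintro t n mlen rfl rfl ⟨ys, hys, hred⟩
  have hH : ∀ w, Hull t w ↔ Hull (trivTP ys) w := by
    intro w
    clear hys
    generalize trivTP ys = u at hred
    induction hred with
    | refl => rfl
    | tail _ h ih => rw [ih, h.hull w]
  have hlen : ys.length ≤ t.length := by
    have : (trivTP ys : TP A V).length ≤ t.length := by
      clear hH hys
      generalize trivTP ys = u at hred
      induction hred with
      | refl => exact le_rfl
      | tail _ h ih => exact h.length_le.trans ih
    simpa [trivTP] using this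
  obtain ⟨θ₁, θ₂, hC⟩ := exists_code (A := A) ys (Nat.clog 2 t.length)
    (hlen.trans (Nat.le_pow_clog (by norm_num) _))
  obtain ⟨a, b, hab, hsp⟩ := hC.spec
  refine ⟨t.map (col θ₁ θ₂), by simp, ?_, ?_, ?_⟩
  · intro c hc
    obtain ⟨p, -, rfl⟩ := List.mem_map.1 hc
    rfl
  · apply size_bound
    · intro y
      obtain ⟨w, h1, h2, h3⟩ := hsp y
      simp [h1, h3]
    · intro y
      obtain ⟨w, h1, h2, h3⟩ := hsp y
      simp [h2, h3]
  · intro xs hxs hxl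
    obtain ⟨f, hI⟩ := inv_init (θ₁ := θ₁) (θ₂ := θ₂) hH xs hxs hxl
    constructor
    · obtain ⟨⟨tc, Θ⟩, hr, hN⟩ := inv_exists hC _
        (trivTP xs, ⟨2, xs.zip (t.map (col θ₁ θ₂))⟩) f hI le_rfl
      obtain ⟨f', hI'⟩ := inv_star hC hr hI
      obtain ⟨σ, rfl⟩ := inv_terminal hC hI' hN
      exact ⟨σ, Θ, σ.injective, hr, hN⟩
    · intro t' Θ' hr hN
      obtain ⟨f', hI'⟩ := inv_star hC hr hI
      obtain ⟨σ, rfl⟩ := inv_terminal hC hI' hN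
      exact lang_rename σ t

end STPaper
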